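/- Let Σ be a countable semigroup and let (Σ_k)_{k≥1} be a Følner sequence of Σ. Then for every x ∈ ℓ∞(Σ) the limit L(x) := lim_{k→∞} ( sup_{s∈Σ} (1/|Σ_k|) Σ_{h∈Σ_k} x_{hs} ) exists; moreover, if (Σ_k')_{k≥1} is another Følner sequence of Σ, then lim_{k→∞} ( sup_{s∈Σ} (1/|Σ_k|) Σ_{h∈Σ_k} x_{hs} ) = lim_{k→∞} ( sup_{s∈Σ} (1/|Σ_k'|) Σ_{h∈Σ_k'} x_{hs} ) for every x ∈ ℓ∞(Σ). -/

import Mathlib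

open Filter BoundedContinuousFunction

/-- `(F k)` is a Følner sequence of the semigroup `S`. -/
def IsFolner {S : Type*} [Semigroup S] [DecidableEq S] (F : ℕ → Finset S) : Prop :=
  (∀ k, (F k).Nonempty) ∧
  ∀ s : S, Tendsto
    (fun k => ((symmDiff ((F k).image (fun h => s * h)) (F k)).card : ℝ) / (F k).card)
    atTop (nhds 0)

/-- The average `(1/|F|) Σ_{h∈F} x_{h s}`. -/
noncomputable def folnerAvg {S : Type*} [Semigroup S] [TopologicalSpace S]
    (F : Finset S) (x : BoundedContinuousFunction S ℝ) (s : S) : ℝ :=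
  (∑ h ∈ F, x (h * s)) / F.card

/-- A generalized limit on `ℓ∞(S)`: a positive, normalized, left translation invariant
linear functional. -/
def IsGenLimit {S : Type*} [Semigroup S] [TopologicalSpace S] [DiscreteTopology S]
    (Θ : BoundedContinuousFunction S ℝ →ₗ[ℝ] ℝ) : Prop :=
  (∀ x : BoundedContinuousFunction S ℝ, (∀ s, 0 ≤ x s) → 0 ≤ Θ x) ∧
  (Θ (BoundedContinuousFunction.const S (1:ℝ)) = 1) ∧
  ∀ (s₀ : S) (x : BoundedContinuousFunction S ℝ),
    Θ (x.compContinuous ⟨fun s => s₀ * s, continuous_of_discreteTopology⟩) = Θ x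

lemma folner_aux_shift {S : Type*} [Semigroup S] [DecidableEq S] (F : Finset S) (g : S)
    (f : S → ℝ) (C : ℝ) (hC : ∀ s, |f s| ≤ C) :
    ∑ h ∈ F, f h ≤ ∑ h ∈ F, f (g * h) +
      2 * C * (symmDiff (F.image (fun h => g * h)) F).card := by
  have hu : ∀ s, 0 ≤ f s + C := fun s => by linarith [(abs_le.1 (hC s)).1]
  have hu2 : ∀ s, f s + C ≤ 2 * C := fun s => by linarith [(abs_le.1 (hC s)).2]
  have h1 : ∑ h ∈ F.image (fun h => g * h), (f h + C) ≤ ∑ h ∈ F, (f (g * h) + C) := by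
    exact Finset.sum_image_le_of_nonneg (f := fun h => f h + C) (fun u _ => hu u)
  have h2 : ∑ h ∈ F, (f h + C) ≤ ∑ h ∈ F.image (fun h => g * h) ∪
      symmDiff (F.image (fun h => g * h)) F, (f h + C) := by
    apply Finset.sum_le_sum_of_subset_of_nonneg
    · intro a ha
      by_cases h : a ∈ F.image (fun h => g * h)
      · exact Finset.mem_union_left _ h
      · exact Finset.mem_union_right _ (Finset.mem_symmDiff.2 (Or.inr ⟨ha, h⟩))
    · exact fun i _ _ => hu _
  have h3 := Finset.sum_union_inter (s₁ := F.image (fun h => g * h))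
    (s₂ := symmDiff (F.image (fun h => g * h)) F) (f := fun h => f h + C)
  have h4 : 0 ≤ ∑ h ∈ F.image (fun h => g * h) ∩
      symmDiff (F.image (fun h => g * h)) F, (f h + C) := Finset.sum_nonneg fun i _ => hu _
  have h5 : ∑ h ∈ symmDiff (F.image (fun h => g * h)) F, (f h + C) ≤
      (symmDiff (F.image (fun h => g * h)) F).card * (2 * C) := by
    have := Finset.sum_le_card_nsmul (symmDiff (F.image (fun h => g * h)) F)
      (fun h => f h + C) (2 * C) (fun i _ => hu2 i)
    simpa [nsmul_eq_mul] using this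
  rw [Finset.sum_add_distrib] at h1 h2
  rw [Finset.sum_add_distrib] at h1
  simp only [Finset.sum_add_distrib] at h1 h2 h3 h4 h5
  linarith

lemma folner_aux_abs {S : Type*} [TopologicalSpace S] (x : BoundedContinuousFunction S ℝ) (s : S) :
    |x s| ≤ ‖x‖ := by
  simpa using x.norm_coe_le_norm s

lemma folner_aux_avg_abs {S : Type*} [Semigroup S] [TopologicalSpace S] (F : Finset S)
    (hF : F.Nonempty) (x : BoundedContinuousFunction S ℝ) (s : S) :
    |folnerAvg F x s| ≤ ‖x‖ := by
  have hc : (0:ℝ) < F.card := by exact_mod_cast hF.card_pos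
  unfold folnerAvg
  rw [abs_div, abs_of_pos hc, div_le_iff₀ hc]
  refine (Finset.abs_sum_le_sum_abs _ _).trans ?_
  have := Finset.sum_le_card_nsmul F (fun h => |x (h * s)|) ‖x‖ (fun i _ => folner_aux_abs x _)
  rw [nsmul_eq_mul] at this
  linarith

lemma folner_aux_bdd {S : Type*} [Semigroup S] [TopologicalSpace S] (F : Finset S)
    (hF : F.Nonempty) (x : BoundedContinuousFunction S ℝ) :
    BddAbove (Set.range fun s => folnerAvg F x s) :=
  ⟨‖x‖, by rintro _ ⟨s, rfl⟩; exact (abs_le.1 (folner_aux_avg_abs F hF x s)).2⟩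

lemma folner_aux_key {S : Type*} [Semigroup S] [DecidableEq S] [TopologicalSpace S]
    (E : Finset S) (hE : E.Nonempty) (F : Finset S) (hF : F.Nonempty)
    (x : BoundedContinuousFunction S ℝ) (s : S) :
    folnerAvg F x s ≤ (⨆ t : S, folnerAvg E x t) + (2 * ‖x‖ / E.card) *
      ∑ g ∈ E, ((symmDiff (F.image (fun h => g * h)) F).card : ℝ) / F.card := by
  have hc : (0:ℝ) < F.card := by exact_mod_cast hF.card_pos
  have he : (0:ℝ) < E.card := by exact_mod_cast hE.card_pos
  set M := ⨆ t : S, folnerAvg E x t with hM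
  have h1 : ∀ g ∈ E, ∑ h ∈ F, x (h * s) ≤ ∑ h ∈ F, x (g * h * s) +
      2 * ‖x‖ * (symmDiff (F.image (fun h => g * h)) F).card := fun g _ =>
    folner_aux_shift F g (fun h => x (h * s)) ‖x‖ (fun t => folner_aux_abs x _)
  have h2 := Finset.sum_le_sum h1
  rw [Finset.sum_const, nsmul_eq_mul, Finset.sum_add_distrib, Finset.sum_comm,
    ← Finset.mul_sum] at h2
  have h3 : ∑ h ∈ F, ∑ g ∈ E, x (g * h * s) ≤ F.card * (M * E.card) := by
    rw [← nsmul_eq_mul]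
    apply Finset.sum_le_card_nsmul
    intro h _
    have := le_ciSup (folner_aux_bdd E hE x) (h * s)
    change folnerAvg E x (h * s) ≤ M at this
    unfold folnerAvg at this
    rw [div_le_iff₀ he] at this
    simpa [mul_assoc] using this
  unfold folnerAvg
  rw [← Finset.sum_div, div_le_iff₀ hc]
  set D := ∑ g ∈ E, ((symmDiff (F.image (fun h => g * h)) F).card : ℝ)
  have h4 : (M + 2 * ‖x‖ / E.card * (D / F.card)) * F.card =
      (F.card * (M * E.card) + 2 * ‖x‖ * D) / E.card := by
    field_simp
  rw [h4, le_div_iff₀ he]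
  linarith

lemma folner_aux_ev {S : Type*} [Semigroup S] [DecidableEq S] [TopologicalSpace S]
    (E : Finset S) (hE : E.Nonempty) (F : ℕ → Finset S) (hF : IsFolner F)
    (x : BoundedContinuousFunction S ℝ) (b : ℝ) (hb : (⨆ t : S, folnerAvg E x t) < b) :
    ∀ᶠ k in atTop, (⨆ t : S, folnerAvg (F k) x t) < b := by
  haveI : Nonempty S := ⟨hE.choose⟩
  have h1 : Tendsto (fun k => (⨆ t : S, folnerAvg E x t) + (2 * ‖x‖ / E.card) *
      ∑ g ∈ E, ((symmDiff ((F k).image (fun h => g * h)) (F k)).card : ℝ) / (F k).card)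
      atTop (nhds ((⨆ t : S, folnerAvg E x t) + (2 * ‖x‖ / E.card) * ∑ g ∈ E, (0:ℝ))) :=
    (tendsto_finsetSum E fun g _ => hF.2 g).const_mul _ |>.const_add _
  have h2 : (⨆ t : S, folnerAvg E x t) + (2 * ‖x‖ / E.card) * ∑ g ∈ E, (0:ℝ) < b := by
    simpa using hb
  filter_upwards [h1.eventually_lt_const h2] with k hk
  exact (ciSup_le fun s => folner_aux_key E hE (F k) (hF.1 k) x s).trans_lt hk

lemma folner_aux_lim {S : Type*} [Semigroup S] [DecidableEq S] [TopologicalSpace S]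
    (F : ℕ → Finset S) (hF : IsFolner F) (x : BoundedContinuousFunction S ℝ) :
    Tendsto (fun k => ⨆ s : S, folnerAvg (F k) x s) atTop
      (nhds (⨅ m, ⨆ s : S, folnerAvg (F m) x s)) := by
  have hbd : BddBelow (Set.range fun m => ⨆ s : S, folnerAvg (F m) x s) := by
    refine ⟨-‖x‖, ?_⟩
    rintro _ ⟨m, rfl⟩
    have s := (hF.1 m).choose
    exact (abs_le.1 (folner_aux_avg_abs (F m) (hF.1 m) x s)).1.trans
      (le_ciSup (folner_aux_bdd (F m) (hF.1 m) x) s)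
  refine tendsto_order.2 ⟨fun a ha => ?_, fun b hb => ?_⟩
  · exact Eventually.of_forall fun k => ha.trans_le (ciInf_le hbd k)
  · obtain ⟨m, hm⟩ := exists_lt_of_ciInf_lt hb
    exact folner_aux_ev (F m) (hF.1 m) F hF x b hm

lemma folner_aux_le {S : Type*} [Semigroup S] [DecidableEq S] [TopologicalSpace S]
    (F F' : ℕ → Finset S) (hF : IsFolner F) (hF' : IsFolner F')
    (x : BoundedContinuousFunction S ℝ) :
    (⨅ m, ⨆ s : S, folnerAvg (F m) x s) ≤ ⨅ m, ⨆ s : S, folnerAvg (F' m) x s := by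
  refine le_of_forall_gt_imp_ge_of_dense fun b hb => ?_
  obtain ⟨m, hm⟩ := exists_lt_of_ciInf_lt hb
  exact le_of_tendsto (folner_aux_lim F hF x)
    ((folner_aux_ev (F' m) (hF'.1 m) F hF x b hm).mono fun _ h => h.le)

theorem folner_sup_average_limit_exists_and_independent
    {S : Type*} [Semigroup S] [Countable S] [DecidableEq S]
    [TopologicalSpace S] [DiscreteTopology S]
    (F F' : ℕ → Finset S) (hF : IsFolner F) (hF' : IsFolner F')
    (x : BoundedContinuousFunction S ℝ) :
    ∃ L : ℝ, Tendsto (fun k => ⨆ s : S, folnerAvg (F k) x s) atTop (nhds L) ∧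
      Tendsto (fun k => ⨆ s : S, folnerAvg (F' k) x s) atTop (nhds L) := by
  refine ⟨_, folner_aux_lim F hF x, ?_⟩
  rw [le_antisymm (folner_aux_le F F' hF hF' x) (folner_aux_le F' F hF' hF x)]
  exact folner_aux_lim F' hF' x
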